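/- Let G = (𝒩, w) be a closed octagonal graph and let i, j ∈ 𝒩 be such that i ≠ j̄ and 2·w(i,j) ≥ w(i,ī) + w(j̄,j). Define the graph G_s = (𝒩, w_s) by w_s(h₁,h₂) = (w(i,ī) + w(j̄,j))/2 if (h₁,h₂) ∈ {(i,j), (j̄,ī)}, and w_s(h₁,h₂) = w(h₁,h₂) otherwise. Then G_s is consistent and, letting w_s★ be its shortest-path closure (the pointwise supremum of all closed graphs ⊴ w_s), for all z₁, z₂ ∈ 𝒩 at least one of the following holds: (a) w_s★(z₁,z₂) = w(z₁,z₂); (b) 2·w_s★(z₁,z₂) ≥ w(z₁, z̄₁) + w(z̄₂, z₂). -/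

import Mathlib

/-- Extended rationals: ℚ ∪ {+∞}. -/
abbrev Qinf := WithTop ℚ

/-- Weight of a path (list of nodes): sum of the weights of its arcs. -/
def pathWeight {N : Type*} (w : N → N → Qinf) : List N → Qinf
  | [] => 0
  | [_] => 0
  | a :: b :: l => w a b + pathWeight w (b :: l)

/-- A proper cycle: at least two arcs, first node equals last node,
    consecutive nodes distinct. -/
def IsProperCycle {N : Type*} (l : List N) : Prop :=
  3 ≤ l.length ∧ l.head? = l.getLast? ∧ l.Chain' (· ≠ ·)

/-- A graph is consistent if it has no proper cycle of negative weight. -/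
def Consistent {N : Type*} (w : N → N → Qinf) : Prop :=
  ∀ l : List N, IsProperCycle l → 0 ≤ pathWeight w l

/-- A consistent graph is closed if self-loops have weight 0 and the
    triangle inequality holds. -/
def ClosedG {N : Type*} (w : N → N → Qinf) : Prop :=
  Consistent w ∧ (∀ i, w i i = 0) ∧ ∀ i j k, w i j ≤ w i k + w k j

/-- The "bar" involution on nodes: ī = i+1 for even i, ī = i-1 for odd i. -/
def bar {n : ℕ} (i : Fin (2 * n)) : Fin (2 * n) :=
  if _h : i.val % 2 = 0 then ⟨i.val + 1, by have := i.isLt; omega⟩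
  else ⟨i.val - 1, by have := i.isLt; omega⟩

/-- Coherence: w(i,j) = w(j̄,ī). -/
def Coherent {n : ℕ} (w : Fin (2 * n) → Fin (2 * n) → Qinf) : Prop :=
  ∀ i j, w i j = w (bar j) (bar i)

/-- An octagonal graph: consistent and coherent. -/
def Octagonal {n : ℕ} (w : Fin (2 * n) → Fin (2 * n) → Qinf) : Prop :=
  Consistent w ∧ Coherent w

/-- Pointwise order on graphs. -/
def GLe {n : ℕ} (w₁ w₂ : Fin (2 * n) → Fin (2 * n) → Qinf) : Prop :=
  ∀ i j, w₁ i j ≤ w₂ i j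

/-- Halving on ℚ∞ (with +∞/2 = +∞). -/
def half (x : Qinf) : Qinf := x.map (fun q => q / 2)

/-- Floored halving on ℚ∞ (with ⌊+∞/2⌋ = +∞). -/
def fhalf (x : Qinf) : Qinf := x.map (fun q => ((⌊q / 2⌋ : ℤ) : ℚ))

/-- Integer weights: every weight is an integer or +∞. -/
def IntWeights {n : ℕ} (w : Fin (2 * n) → Fin (2 * n) → Qinf) : Prop :=
  ∀ i j, w i j = ⊤ ∨ ∃ d : ℤ, w i j = ((d : ℚ) : Qinf)

/-- A strongly closed octagonal graph. -/
def StronglyClosed {n : ℕ} (w : Fin (2 * n) → Fin (2 * n) → Qinf) : Prop :=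
  Octagonal w ∧ ClosedG w ∧ ∀ i j, 2 * w i j ≤ w i (bar i) + w (bar j) j

/-- A tightly closed integer octagonal graph. -/
def TightlyClosed {n : ℕ} (w : Fin (2 * n) → Fin (2 * n) → Qinf) : Prop :=
  IntWeights w ∧ StronglyClosed w ∧
    ∀ i, w i (bar i) = ⊤ ∨ ∃ d : ℤ, w i (bar i) = (((2 * d : ℤ) : ℚ) : Qinf)

/-!
Call `c` the new weight, so that `2 * c = w i (bar i) + w (bar j) j`. A path in the closure of `ws`
never gains by using a new arc twice, since the new arcs lie on no negative cycle, nor by using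
both, since two copies of `c` pay for the arcs `i → bar i` and `bar j → j` of the closed graph `w`.
The closure is therefore the minimum of `w` and of the paths through exactly one new arc.
The arcs of such a path from `a` to `b` and of its mirror image under `bar`, with the two new arcs
traded for `i → bar i` and `bar j → j`, rearrange into paths from `a` to `bar a` and from `bar b`
to `b`: this is the strong-coherence bound.
-/

theorem withTop_two_mul {α : Type*} [NonAssocSemiring α] [DecidableEq α] [NeZero (2 : α)]
    (x : WithTop α) : 2 * x = x + x := by
  cases x with
  | top => exact WithTop.mul_top (WithTop.coe_ne_zero.2 two_ne_zero)
  | coe q => exact congrArg _ (two_mul q)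

theorem withTop_le_of_add_self_le_add_self {α : Type*} [Add α] [LinearOrder α] [AddLeftStrictMono α]
    [AddRightStrictMono α] {x y : WithTop α} (h : x + x ≤ y + y) : x ≤ y := by
  contrapose! h
  exact WithTop.add_lt_add h h

theorem half_add_half (x : Qinf) : half x + half x = x := by
  induction x using WithTop.recTopCoe with
  | top => rfl
  | coe q => exact congrArg _ (add_halves q)

section Paths

variable {N : Type*} {v w : N → N → Qinf}

theorem pathWeight_mono (h : v ≤ w) : ∀ l : List N, pathWeight v l ≤ pathWeight w l
  | [] | [_] => le_rfl
  | a :: b :: l => add_le_add (h a b) (pathWeight_mono h (b :: l))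

theorem Consistent.mono (hv : Consistent v) (h : v ≤ w) : Consistent w := fun l hl =>
  (hv l hl).trans (pathWeight_mono h l)

theorem le_pathWeight (hself : ∀ a, w a a ≤ 0) (htri : ∀ a b k, w a b ≤ w a k + w k b) (a : N)
    (l : List N) : w a ((a :: l).getLast (List.cons_ne_nil a l)) ≤ pathWeight w (a :: l) := by
  induction l generalizing a with
  | nil => exact hself a
  | cons b l ih => exact (htri a _ b).trans (add_le_add_right (ih b) _)

theorem closedG_of_triangle (hself : ∀ a, w a a = 0)
    (htri : ∀ a b k, w a b ≤ w a k + w k b) : ClosedG w := by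
  refine ⟨?_, hself, htri⟩
  rintro (_ | ⟨a, l⟩) ⟨hlen, hends, -⟩
  · simp at hlen
  · have hlast : (a :: l).getLast (List.cons_ne_nil a l) = a := by
      simpa [List.getLast?_eq_getLast_of_ne_nil] using hends.symm
    simpa only [hlast, hself] using le_pathWeight (fun a => (hself a).le) htri a l

end Paths

/-- The weight of the cheapest path from `a` to `b` through an extra arc `p → q` of weight `c`,
when `w` already records the shortest distances between nodes. -/
def detour {N : Type*} (w : N → N → Qinf) (p q : N) (c : Qinf) (a b : N) : Qinf :=
  w a p + c + w q b

namespace ClosedG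

variable {N : Type*} {w : N → N → Qinf} {p q r s : N} {c d : Qinf}

theorem apply_self (hw : ClosedG w) (a : N) : w a a = 0 :=
  hw.2.1 a

theorem triangle (hw : ClosedG w) (a b k : N) : w a b ≤ w a k + w k b :=
  hw.2.2 a b k

theorem detour_self (hw : ClosedG w) : detour w p q c p q = c := by
  simp only [detour, hw.apply_self, zero_add, add_zero]

theorem detour_nonneg (hw : ClosedG w) (hpq : 0 ≤ c + w q p) (a : N) :
    0 ≤ detour w p q c a a :=
  calc 0 ≤ c + w q p := hpq
    _ ≤ c + (w q a + w a p) := by gcongr; exact hw.triangle q p a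
    _ = detour w p q c a a := by unfold detour; abel

theorem detour_le_add_detour (hw : ClosedG w) (a b k : N) :
    detour w p q c a b ≤ w a k + detour w p q c k b :=
  calc w a p + c + w q b ≤ (w a k + w k p) + c + w q b := by gcongr; exact hw.triangle a p k
    _ = w a k + detour w p q c k b := by unfold detour; abel

theorem detour_le_detour_add (hw : ClosedG w) (a b k : N) :
    detour w p q c a b ≤ detour w p q c a k + w k b :=
  calc w a p + c + w q b ≤ w a p + c + (w q k + w k b) := by gcongr; exact hw.triangle q b k
    _ = detour w p q c a k + w k b := by unfold detour; abel

theorem detour_le_detour_add_detour (hw : ClosedG w) (hpq : 0 ≤ c + w q p) (a b k : N) :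
    detour w p q c a b ≤ detour w p q c a k + detour w p q c k b :=
  calc detour w p q c a b ≤ detour w p q c a b + detour w p q c k k :=
        le_add_of_nonneg_right (hw.detour_nonneg hpq k)
    _ = detour w p q c a k + detour w p q c k b := by unfold detour; abel

theorem le_detour_add_detour (hw : ClosedG w) (hps : w p s ≤ c + w q r + d) (a b k : N) :
    w a b ≤ detour w p q c a k + detour w r s d k b :=
  calc w a b ≤ w a p + (w p s + w s b) :=
        (hw.triangle a b p).trans (add_le_add_right (hw.triangle p b s) _)
    _ ≤ w a p + ((c + (w q k + w k r) + d) + w s b) := by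
        gcongr; exact hps.trans (by gcongr; exact hw.triangle q r k)
    _ = detour w p q c a k + detour w r s d k b := by unfold detour; abel

end ClosedG

/-- The graph of cheapest paths using at most one of two extra arcs, `p → q` of weight `c` and
`r → s` of weight `d`, when `w` already records the shortest distances between nodes. -/
def shortcut {N : Type*} (w : N → N → Qinf) (p q r s : N) (c d : Qinf) (a b : N) : Qinf :=
  min (w a b) (min (detour w p q c a b) (detour w r s d a b))

section Shortcut

variable {N : Type*} {v w ws : N → N → Qinf} {p q r s : N} {c d : Qinf}

theorem shortcut_le : shortcut w p q r s c d ≤ w := fun _ _ => min_le_left _ _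

theorem shortcut_le_detour_left : shortcut w p q r s c d ≤ detour w p q c := fun _ _ =>
  (min_le_right _ _).trans (min_le_left _ _)

theorem shortcut_le_detour_right : shortcut w p q r s c d ≤ detour w r s d := fun _ _ =>
  (min_le_right _ _).trans (min_le_right _ _)

theorem shortcut_choice (w : N → N → Qinf) (p q r s : N) (c d : Qinf) (a b : N) :
    shortcut w p q r s c d a b = w a b ∨ shortcut w p q r s c d a b = detour w p q c a b ∨
      shortcut w p q r s c d a b = detour w r s d a b := by
  unfold shortcut
  grind

-- `hpq` and `hrs` make using one extra arc twice redundant, `hps` and `hrq` using both.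
theorem closedG_shortcut (hw : ClosedG w) (hpq : 0 ≤ c + w q p) (hrs : 0 ≤ d + w s r)
    (hps : w p s ≤ c + w q r + d) (hrq : w r q ≤ d + w s p + c) :
    ClosedG (shortcut w p q r s c d) := by
  refine closedG_of_triangle (fun a => ?_) fun a b k => ?_
  · exact ((shortcut_le a a).trans (hw.apply_self a).le).antisymm
      (le_min (hw.apply_self a).ge (le_min (hw.detour_nonneg hpq a) (hw.detour_nonneg hrs a)))
  · rcases shortcut_choice w p q r s c d a k with hak | hak | hak <;>
      rcases shortcut_choice w p q r s c d k b with hkb | hkb | hkb <;> rw [hak, hkb]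
    · exact (shortcut_le a b).trans (hw.triangle a b k)
    · exact (shortcut_le_detour_left a b).trans (hw.detour_le_add_detour a b k)
    · exact (shortcut_le_detour_right a b).trans (hw.detour_le_add_detour a b k)
    · exact (shortcut_le_detour_left a b).trans (hw.detour_le_detour_add a b k)
    · exact (shortcut_le_detour_left a b).trans (hw.detour_le_detour_add_detour hpq a b k)
    · exact (shortcut_le a b).trans (hw.le_detour_add_detour hps a b k)
    · exact (shortcut_le_detour_right a b).trans (hw.detour_le_detour_add a b k)
    · exact (shortcut_le a b).trans (hw.le_detour_add_detour hrq a b k)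
    · exact (shortcut_le_detour_right a b).trans (hw.detour_le_detour_add_detour hrs a b k)

theorem ClosedG.le_detour (hv : ClosedG v) (hvw : v ≤ w) (hc : v p q ≤ c) :
    v ≤ detour w p q c := fun a b =>
  calc v a b ≤ v a p + v p b := hv.triangle a b p
    _ ≤ v a p + (v p q + v q b) := by gcongr; exact hv.triangle p b q
    _ = v a p + v p q + v q b := (add_assoc _ _ _).symm
    _ ≤ detour w p q c a b := add_le_add (add_le_add (hvw a p) hc) (hvw q b)

theorem ClosedG.le_shortcut (hv : ClosedG v) (hvw : v ≤ w) (hc : v p q ≤ c) (hd : v r s ≤ d) :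
    v ≤ shortcut w p q r s c d := fun a b =>
  le_min (hvw a b) (le_min (hv.le_detour hvw hc a b) (hv.le_detour hvw hd a b))

theorem isGreatest_shortcut [DecidableEq N] (hw : ClosedG w) (hpq : 0 ≤ c + w q p)
    (hrs : 0 ≤ c + w s r) (hps : w p s ≤ c + w q r + c) (hrq : w r q ≤ c + w s p + c)
    (hcpq : c ≤ w p q) (hcrs : c ≤ w r s)
    (hws : ∀ a b, ws a b = if (a = p ∧ b = q) ∨ (a = r ∧ b = s) then c else w a b) :
    IsGreatest {v | ClosedG v ∧ v ≤ ws} (shortcut w p q r s c c) := by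
  refine ⟨⟨closedG_shortcut hw hpq hrs hps hrq, fun a b => ?_⟩, fun v ⟨hv, hvws⟩ => ?_⟩
  · rw [hws]
    split_ifs with hab
    · rcases hab with ⟨rfl, rfl⟩ | ⟨rfl, rfl⟩
      · exact (shortcut_le_detour_left _ _).trans_eq hw.detour_self
      · exact (shortcut_le_detour_right _ _).trans_eq hw.detour_self
    · exact shortcut_le a b
  · have hwsw : ws ≤ w := fun a b => by
      rw [hws]
      split_ifs with hab
      · rcases hab with ⟨rfl, rfl⟩ | ⟨rfl, rfl⟩ <;> assumption
      · exact le_rfl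
    exact hv.le_shortcut (hvws.trans hwsw) ((hvws p q).trans_eq (by simp [hws]))
      ((hvws r s).trans_eq (by simp [hws]))

theorem eq_of_isLUB_of_isGreatest_closedG {x : Qinf} {a b : N}
    (hx : IsLUB {y | ∃ u, ClosedG u ∧ u ≤ ws ∧ y = u a b} x)
    (hv : IsGreatest {u | ClosedG u ∧ u ≤ ws} v) : x = v a b := by
  refine hx.unique (IsGreatest.isLUB ⟨⟨v, hv.1.1, hv.1.2, rfl⟩, ?_⟩)
  rintro _ ⟨u, hu, huws, rfl⟩
  exact hv.2 ⟨hu, huws⟩ a b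

end Shortcut

section Coherence

variable {N : Type*} {σ : N → N} {w : N → N → Qinf} {i j : N} {c : Qinf}

theorem strong_coherence_le_detour (hw : ClosedG w) (hco : ∀ a b, w a b = w (σ b) (σ a))
    (hc : c + c = w i (σ i) + w (σ j) j) (a b : N) :
    w a (σ a) + w (σ b) b ≤ detour w i j c a b + detour w i j c a b := by
  have ha : w a (σ a) ≤ w a i + (w i (σ i) + w a i) :=
    calc w a (σ a) ≤ w a i + (w i (σ i) + w (σ i) (σ a)) :=
          (hw.triangle a _ i).trans (add_le_add_right (hw.triangle i _ (σ i)) _)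
      _ = w a i + (w i (σ i) + w a i) := by rw [← hco]
  have hb : w (σ b) b ≤ w j b + (w (σ j) j + w j b) :=
    calc w (σ b) b ≤ w (σ b) (σ j) + (w (σ j) j + w j b) :=
          (hw.triangle _ b (σ j)).trans (add_le_add_right (hw.triangle _ b j) _)
      _ = w j b + (w (σ j) j + w j b) := by rw [← hco]
  calc w a (σ a) + w (σ b) b
      ≤ (w a i + (w i (σ i) + w a i)) + (w j b + (w (σ j) j + w j b)) := add_le_add ha hb
    _ = w a i + w a i + (w i (σ i) + w (σ j) j) + (w j b + w j b) := by abel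
    _ = detour w i j c a b + detour w i j c a b := by rw [← hc]; unfold detour; abel

theorem detour_mirror (hσ : Function.Involutive σ) (hco : ∀ a b, w a b = w (σ b) (σ a)) (a b : N) :
    detour w (σ j) (σ i) c a b = detour w i j c (σ b) (σ a) := by
  unfold detour
  rw [hco a, hco (σ i), hσ j, hσ i]
  abel

theorem strong_coherence_le_detour_mirror (hσ : Function.Involutive σ) (hw : ClosedG w)
    (hco : ∀ a b, w a b = w (σ b) (σ a)) (hc : c + c = w i (σ i) + w (σ j) j) (a b : N) :
    w a (σ a) + w (σ b) b ≤ detour w (σ j) (σ i) c a b + detour w (σ j) (σ i) c a b := by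
  rw [detour_mirror hσ hco, add_comm (w a _)]
  simpa only [hσ a, hσ b] using strong_coherence_le_detour hw hco hc (σ b) (σ a)

theorem strong_coherence_add_reverse_nonneg (hw : ClosedG w) (hco : ∀ a b, w a b = w (σ b) (σ a))
    (hc : c + c = w i (σ i) + w (σ j) j) : 0 ≤ c + w j i := by
  apply withTop_le_of_add_self_le_add_self
  calc (0 : Qinf) + 0 = w i i := by rw [add_zero, hw.apply_self]
    _ ≤ w i (σ i) + w (σ i) i := hw.triangle i i (σ i)
    _ ≤ detour w i j c i i + detour w i j c i i := strong_coherence_le_detour hw hco hc i i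
    _ = (c + w j i) + (c + w j i) := by simp only [detour, hw.apply_self, zero_add]

theorem isGreatest_strong_coherence_shortcut [DecidableEq N] (hw : ClosedG w)
    (hco : ∀ a b, w a b = w (σ b) (σ a))
    (hc : c + c = w i (σ i) + w (σ j) j) (hcij : c ≤ w i j) {ws : N → N → Qinf}
    (hws : ∀ a b, ws a b = if (a = i ∧ b = j) ∨ (a = σ j ∧ b = σ i) then c else w a b) :
    IsGreatest {v | ClosedG v ∧ v ≤ ws} (shortcut w i j (σ j) (σ i) c c) := by
  have hcycle (k l : N) : 0 ≤ w k l + w l k := (hw.apply_self k).ge.trans (hw.triangle k k l)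
  have hreverse : 0 ≤ c + w j i := strong_coherence_add_reverse_nonneg hw hco hc
  refine isGreatest_shortcut hw hreverse (by rwa [← hco]) ?_ ?_ hcij (by rwa [← hco]) hws
  · calc w i (σ i) ≤ w i (σ i) + (w (σ j) j + w j (σ j)) := le_add_of_nonneg_right (hcycle _ _)
      _ = c + c + w j (σ j) := by rw [hc, add_assoc]
      _ = c + w j (σ j) + c := add_right_comm _ _ _
  · calc w (σ j) j ≤ w (σ j) j + (w i (σ i) + w (σ i) i) := le_add_of_nonneg_right (hcycle _ _)
      _ = c + c + w (σ i) i := by rw [hc]; abel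
      _ = c + w (σ i) i + c := add_right_comm _ _ _

end Coherence

theorem bar_involutive {n : ℕ} : Function.Involutive (bar : Fin (2 * n) → Fin (2 * n)) := by
  intro i
  unfold bar
  grind

theorem closed_to_one_step_strong_coherence_general {N : Type*} [DecidableEq N] {σ : N → N}
    (hσ : Function.Involutive σ) {w : N → N → Qinf} (hw : ClosedG w)
    (hco : ∀ a b, w a b = w (σ b) (σ a)) {i j : N} (hge : w i (σ i) + w (σ j) j ≤ 2 * w i j)
    {ws : N → N → Qinf}
    (hws : ∀ a b, ws a b =
      if (a = i ∧ b = j) ∨ (a = σ j ∧ b = σ i) then half (w i (σ i) + w (σ j) j) else w a b)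
    {wsstar : N → N → Qinf}
    (hstar : ∀ a b, IsLUB {x | ∃ v, ClosedG v ∧ v ≤ ws ∧ x = v a b} (wsstar a b)) :
    Consistent ws ∧ ∀ a b, wsstar a b = w a b ∨
      w a (σ a) + w (σ b) b ≤ 2 * wsstar a b := by
  have hc := half_add_half (w i (σ i) + w (σ j) j)
  have hcij : half (w i (σ i) + w (σ j) j) ≤ w i j :=
    withTop_le_of_add_self_le_add_self (by rwa [hc, ← withTop_two_mul])
  have hgreatest := isGreatest_strong_coherence_shortcut hw hco hc hcij hws
  have ⟨hclosed, hle⟩ := hgreatest.1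
  refine ⟨hclosed.1.mono hle, fun a b => ?_⟩
  rw [eq_of_isLUB_of_isGreatest_closedG (hstar a b) hgreatest, withTop_two_mul]
  rcases shortcut_choice w i j (σ j) (σ i) _ _ a b with h | h | h <;> rw [h]
  · exact Or.inl rfl
  · exact Or.inr (strong_coherence_le_detour hw hco hc a b)
  · exact Or.inr (strong_coherence_le_detour_mirror hσ hw hco hc a b)

/-- After one application of the strong-coherence inference rule
    to a closed octagonal graph, every entry of the shortest-path closure of
    the resulting graph either is unchanged or satisfies the strong-coherence
    lower bound. -/
theorem closed_to_one_step_strong_coherence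
    {n : ℕ} (hn : 1 ≤ n) (w : Fin (2 * n) → Fin (2 * n) → Qinf)
    (hoct : Octagonal w) (hcl : ClosedG w)
    (i j : Fin (2 * n)) (hij : i ≠ bar j)
    (hge : w i (bar i) + w (bar j) j ≤ 2 * w i j)
    (ws : Fin (2 * n) → Fin (2 * n) → Qinf)
    (hws : ∀ h₁ h₂, ws h₁ h₂ =
      if (h₁ = i ∧ h₂ = j) ∨ (h₁ = bar j ∧ h₂ = bar i)
      then half (w i (bar i) + w (bar j) j)
      else w h₁ h₂)
    (wsstar : Fin (2 * n) → Fin (2 * n) → Qinf)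
    (hstar : ∀ a b, IsLUB
      {q : Qinf | ∃ w' : Fin (2 * n) → Fin (2 * n) → Qinf,
        ClosedG w' ∧ GLe w' ws ∧ q = w' a b} (wsstar a b)) :
    Consistent ws ∧
      ∀ z₁ z₂ : Fin (2 * n),
        wsstar z₁ z₂ = w z₁ z₂ ∨
          w z₁ (bar z₁) + w (bar z₂) z₂ ≤ 2 * wsstar z₁ z₂ :=
  closed_to_one_step_strong_coherence_general bar_involutive hcl hoct.2 hge hws hstar
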